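/- Let ν > 0, μ > 0, and let u, B : ℝ × ℝ³ → ℝ³ and P : ℝ × ℝ³ → ℝ be smooth (jointly in (t,x)) satisfying at every (t,x) ∈ ℝ × ℝ³ the viscous MHD system: ∂ₜu − νΔu + (curl u) × u + B × (curl B) + ∇P = 0, div u = 0, ∂ₜB − μΔB = curl(u × B), div B = 0. Assume that for every t, u(t,·) satisfies the Navier-slip boundary condition (u₃ = ∂₃u₁ = ∂₃u₂ = 0 on ∂Ω) and B(t,·) satisfies the insulating boundary condition (B₁ = B₂ = 0 on ∂Ω). Then for every t, (curl)³u(t,·) × n = 0 on ∂Ω; that is (noting (curl)³u = −curl(Δu) since div u = 0), the first and second components of curl(Δu(t,·)) vanish at every point of ∂Ω. -/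

import Mathlib

noncomputable section

open MeasureTheory

/-- Points/vectors in ℝ³, indexed by `Fin 3` (so index `0,1,2` stand for coordinates `1,2,3`). -/
abbrev V3 : Type := Fin 3 → ℝ

/-- Partial derivative in the `i`-th coordinate direction. -/
def pd (i : Fin 3) (f : V3 → ℝ) (x : V3) : ℝ := fderiv ℝ f x (Pi.single i 1)

/-- Divergence of a vector field. -/
def vdiv (u : V3 → V3) (x : V3) : ℝ :=
  pd 0 (fun y => u y 0) x + pd 1 (fun y => u y 1) x + pd 2 (fun y => u y 2) x

/-- Curl of a vector field. -/
def vcurl (u : V3 → V3) (x : V3) : V3 :=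
  ![pd 1 (fun y => u y 2) x - pd 2 (fun y => u y 1) x,
    pd 2 (fun y => u y 0) x - pd 0 (fun y => u y 2) x,
    pd 0 (fun y => u y 1) x - pd 1 (fun y => u y 0) x]

/-- Laplacian of a scalar function. -/
def lap (f : V3 → ℝ) (x : V3) : ℝ :=
  pd 0 (pd 0 f) x + pd 1 (pd 1 f) x + pd 2 (pd 2 f) x

/-- Componentwise Laplacian of a vector field. -/
def vlap (u : V3 → V3) (x : V3) : V3 := fun i => lap (fun y => u y i) x

/-- Advective derivative `(u·∇)V`. -/
def adv (u V : V3 → V3) (x : V3) : V3 := fun i =>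
  u x 0 * pd 0 (fun y => V y i) x + u x 1 * pd 1 (fun y => V y i) x +
    u x 2 * pd 2 (fun y => V y i) x

/-- Cross product in ℝ³. -/
def cross (a b : V3) : V3 :=
  ![a 1 * b 2 - a 2 * b 1, a 2 * b 0 - a 0 * b 2, a 0 * b 1 - a 1 * b 0]

/-- Dot product in ℝ³. -/
def dot (a b : V3) : ℝ := a 0 * b 0 + a 1 * b 1 + a 2 * b 2

/-- Gradient of a scalar function. -/
def grad (f : V3 → ℝ) (x : V3) : V3 := fun i => pd i f x

/-- The boundary `∂Ω = {x : x₃ = 0 or x₃ = 1}`. -/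
def onBdry (x : V3) : Prop := x 2 = 0 ∨ x 2 = 1

/-- Horizontal periodicity (period 1 in x₁ and x₂) of a scalar function. -/
def hperS (f : V3 → ℝ) : Prop :=
  (∀ x, f (x + Pi.single 0 1) = f x) ∧ (∀ x, f (x + Pi.single 1 1) = f x)

/-- Horizontal periodicity (period 1 in x₁ and x₂) of a vector field. -/
def hperV (u : V3 → V3) : Prop :=
  (∀ x, u (x + Pi.single 0 1) = u x) ∧ (∀ x, u (x + Pi.single 1 1) = u x)

/-- The unit cube `Q = [0,1]³`. -/
def Q3 : Set V3 := Set.Icc 0 1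

theorem pd_smooth {f : V3 → ℝ} (hf : ContDiff ℝ (⊤ : ℕ∞) f) (i : Fin 3) :
    ContDiff ℝ (⊤ : ℕ∞) (pd i f) := by
  have h : ContDiff ℝ (⊤ : ℕ∞) (fderiv ℝ f) := hf.fderiv_right (by simp)
  exact h.clm_apply contDiff_const

theorem sm_diff {f : V3 → ℝ} (hf : ContDiff ℝ (⊤ : ℕ∞) f) (x : V3) :
    DifferentiableAt ℝ f x := (hf.differentiable (by simp)) x

theorem pd_add' {f g : V3 → ℝ} (hf : ContDiff ℝ (⊤ : ℕ∞) f) (hg : ContDiff ℝ (⊤ : ℕ∞) g)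
    (i : Fin 3) (x : V3) : pd i (fun y => f y + g y) x = pd i f x + pd i g x := by
  unfold pd
  rw [fderiv_fun_add (sm_diff hf x) (sm_diff hg x)]; rfl

theorem pd_sub' {f g : V3 → ℝ} (hf : ContDiff ℝ (⊤ : ℕ∞) f) (hg : ContDiff ℝ (⊤ : ℕ∞) g)
    (i : Fin 3) (x : V3) : pd i (fun y => f y - g y) x = pd i f x - pd i g x := by
  unfold pd
  rw [fderiv_fun_sub (sm_diff hf x) (sm_diff hg x)]; rfl

theorem pd_mul' {f g : V3 → ℝ} (hf : ContDiff ℝ (⊤ : ℕ∞) f) (hg : ContDiff ℝ (⊤ : ℕ∞) g)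
    (i : Fin 3) (x : V3) :
    pd i (fun y => f y * g y) x = f x * pd i g x + g x * pd i f x := by
  unfold pd
  rw [fderiv_fun_mul (sm_diff hf x) (sm_diff hg x)]; simp

theorem pd_cmul {f : V3 → ℝ} (hf : ContDiff ℝ (⊤ : ℕ∞) f) (c : ℝ)
    (i : Fin 3) (x : V3) : pd i (fun y => c * f y) x = c * pd i f x := by
  unfold pd
  rw [fderiv_const_mul (sm_diff hf x)]; simp

theorem second_symm {E : Type*} [NormedAddCommGroup E] [NormedSpace ℝ E] {f : E → ℝ}
    (hf : ContDiff ℝ (⊤ : ℕ∞) f) (x v w : E) :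
    fderiv ℝ (fun y => fderiv ℝ f y v) x w = fderiv ℝ (fun y => fderiv ℝ f y w) x v := by
  have h : ContDiff ℝ (⊤ : ℕ∞) (fderiv ℝ f) := hf.fderiv_right (by simp)
  have hd : DifferentiableAt ℝ (fderiv ℝ f) x := (h.differentiable (by simp)) x
  have key : ∀ v w : E, fderiv ℝ (fun y => fderiv ℝ f y v) x w
      = fderiv ℝ (fderiv ℝ f) x w v := by
    intro v w
    rw [fderiv_clm_apply hd (differentiableAt_const v)]
    simp
  rw [key, key]
  have hs : IsSymmSndFDerivAt ℝ f x := by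
    apply ContDiffAt.isSymmSndFDerivAt (n := ((⊤ : ℕ∞) : WithTop ℕ∞)) hf.contDiffAt
    simp only [minSmoothness_of_isRCLikeNormedField]
    exact WithTop.coe_le_coe.mpr (le_top : (2 : ℕ∞) ≤ ⊤)
  exact hs w v

theorem pd_comm {f : V3 → ℝ} (hf : ContDiff ℝ (⊤ : ℕ∞) f) (i j : Fin 3) (x : V3) :
    pd i (pd j f) x = pd j (pd i f) x := second_symm hf x _ _

theorem pd_tan {f : V3 → ℝ} (hf : ContDiff ℝ (⊤ : ℕ∞) f) (h0 : ∀ x, onBdry x → f x = 0)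
    (i : Fin 3) (hi : i ≠ 2) (x : V3) (hx : onBdry x) : pd i f x = 0 := by
  have h1 : HasDerivAt (fun s : ℝ => x + s • (Pi.single i 1 : V3)) (Pi.single i 1) 0 := by
    simpa using ((hasDerivAt_id (0 : ℝ)).smul_const (Pi.single i 1 : V3)).const_add x
  have hf' : HasFDerivAt f (fderiv ℝ f x) (x + (0 : ℝ) • (Pi.single i 1 : V3)) := by
    simpa using (sm_diff hf x).hasFDerivAt
  have h2 := hf'.comp_hasDerivAt (0 : ℝ) h1
  have h3 : (f ∘ fun s : ℝ => x + s • (Pi.single i 1 : V3)) = fun _ => 0 := by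
    funext s
    apply h0
    have : (x + s • (Pi.single i 1 : V3)) 2 = x 2 := by
      simp [hi.symm]
    change (x + s • (Pi.single i 1 : V3)) 2 = 0 ∨ (x + s • (Pi.single i 1 : V3)) 2 = 1
    rw [this]
    exact hx
  rw [h3] at h2
  exact h2.unique (hasDerivAt_const _ _)

theorem static_main (nu mu : ℝ) (hnu : 0 < nu) (hmu : 0 < mu)
    (u B T : V3 → V3) (E0 E1 P : V3 → ℝ)
    (hu : ∀ i, ContDiff ℝ (⊤ : ℕ∞) (fun y => u y i))
    (hB : ∀ i, ContDiff ℝ (⊤ : ℕ∞) (fun y => B y i))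
    (hT : ∀ i, ContDiff ℝ (⊤ : ℕ∞) (fun y => T y i))
    (hP : ContDiff ℝ (⊤ : ℕ∞) P)
    (hmom : ∀ x (i : Fin 3),
      T x i - nu * vlap u x i
        + cross (vcurl u x) (u x) i + cross (B x) (vcurl B x) i
        + grad P x i = 0)
    (hind0 : ∀ x, E0 x - mu * vlap B x 0 = vcurl (fun y => cross (u y) (B y)) x 0)
    (hind1 : ∀ x, E1 x - mu * vlap B x 1 = vcurl (fun y => cross (u y) (B y)) x 1)
    (hdivB : ∀ x, vdiv B x = 0)
    (hu2 : ∀ x, onBdry x → u x 2 = 0)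
    (hdu0 : ∀ x, onBdry x → pd 2 (fun y => u y 0) x = 0)
    (hdu1 : ∀ x, onBdry x → pd 2 (fun y => u y 1) x = 0)
    (hB0 : ∀ x, onBdry x → B x 0 = 0)
    (hB1 : ∀ x, onBdry x → B x 1 = 0)
    (hE0 : ∀ x, onBdry x → E0 x = 0)
    (hE1 : ∀ x, onBdry x → E1 x = 0)
    (hT2 : ∀ x, onBdry x → T x 2 = 0)
    (hdT0 : ∀ x, onBdry x → pd 2 (fun y => T y 0) x = 0)
    (hdT1 : ∀ x, onBdry x → pd 2 (fun y => T y 1) x = 0)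
    (x : V3) (hx : onBdry x) :
    vcurl (vlap u) x 0 = 0 ∧ vcurl (vlap u) x 1 = 0 := by
  have n0 : (0 : Fin 3) ≠ 2 := by decide
  have n1 : (1 : Fin 3) ≠ 2 := by decide
  have su := fun i j => pd_smooth (hu i) j
  have sB := fun i j => pd_smooth (hB i) j
  have suu := fun i j k => pd_smooth (su i j) k
  have sBB := fun i j k => pd_smooth (sB i j) k
  -- first-order facts on the boundary
  have du2 : ∀ j : Fin 3, j ≠ 2 → ∀ x, onBdry x → pd j (fun y => u y 2) x = 0 :=
    fun j hj x hx => pd_tan (hu 2) hu2 j hj x hx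
  have dB0 : ∀ j : Fin 3, j ≠ 2 → ∀ x, onBdry x → pd j (fun y => B y 0) x = 0 :=
    fun j hj x hx => pd_tan (hB 0) hB0 j hj x hx
  have dB1 : ∀ j : Fin 3, j ≠ 2 → ∀ x, onBdry x → pd j (fun y => B y 1) x = 0 :=
    fun j hj x hx => pd_tan (hB 1) hB1 j hj x hx
  have dB2 : ∀ x, onBdry x → pd 2 (fun y => B y 2) x = 0 := by
    intro x hx
    have := hdivB x
    unfold vdiv at this
    rw [dB0 0 n0 x hx, dB1 1 n1 x hx] at this
    linarith
  -- second-order facts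
  have ddu0 : ∀ j : Fin 3, j ≠ 2 → pd 2 (pd j (fun y => u y 0)) x = 0 := fun j hj => by
    rw [pd_comm (hu 0)]; exact pd_tan (su 0 2) hdu0 j hj x hx
  have ddu1 : ∀ j : Fin 3, j ≠ 2 → pd 2 (pd j (fun y => u y 1)) x = 0 := fun j hj => by
    rw [pd_comm (hu 1)]; exact pd_tan (su 1 2) hdu1 j hj x hx
  have ddB2 : ∀ j : Fin 3, j ≠ 2 → pd 2 (pd j (fun y => B y 2)) x = 0 := fun j hj => by
    rw [pd_comm (hB 2)]; exact pd_tan (sB 2 2) dB2 j hj x hx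
  have tB0 : ∀ j : Fin 3, j ≠ 2 → pd j (pd j (fun y => B y 0)) x = 0 := fun j hj =>
    pd_tan (sB 0 j) (dB0 j hj) j hj x hx
  have tB1 : ∀ j : Fin 3, j ≠ 2 → pd j (pd j (fun y => B y 1)) x = 0 := fun j hj =>
    pd_tan (sB 1 j) (dB1 j hj) j hj x hx
  have sUB : ∀ i j, ContDiff ℝ (⊤ : ℕ∞) (fun y => u y i * B y j) :=
    fun i j => (hu i).mul (hB j)
  have ddB0 : pd 2 (pd 2 (fun y => B y 0)) x = 0 := by
    have h := hind0 x
    simp only [vcurl, vlap, lap, cross, Matrix.cons_val_zero, Matrix.cons_val_one,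
      Matrix.cons_val] at h
    rw [pd_sub' (sUB 0 1) (sUB 1 0), pd_sub' (sUB 2 0) (sUB 0 2)] at h
    simp only [pd_mul' (hu _) (hB _)] at h
    rw [hE0 x hx, tB0 0 n0, tB0 1 n1, hB0 x hx, hB1 x hx, dB0 1 n1 x hx, dB1 1 n1 x hx,
      hu2 x hx, dB2 x hx, hdu0 x hx] at h
    have : mu * pd 2 (pd 2 (fun y => B y 0)) x = 0 := by linarith
    exact (mul_eq_zero.mp this).resolve_left (ne_of_gt hmu)
  have ddB1 : pd 2 (pd 2 (fun y => B y 1)) x = 0 := by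
    have h := hind1 x
    simp only [vcurl, vlap, lap, cross, Matrix.cons_val_zero, Matrix.cons_val_one,
      Matrix.cons_val] at h
    rw [pd_sub' (sUB 0 1) (sUB 1 0), pd_sub' (sUB 1 2) (sUB 2 1)] at h
    simp only [pd_mul' (hu _) (hB _)] at h
    rw [hE1 x hx, tB1 0 n0, tB1 1 n1, hB0 x hx, hB1 x hx, dB0 0 n0 x hx, dB1 0 n0 x hx,
      hu2 x hx, dB2 x hx, hdu1 x hx] at h
    have : mu * pd 2 (pd 2 (fun y => B y 1)) x = 0 := by linarith
    exact (mul_eq_zero.mp this).resolve_left (ne_of_gt hmu)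
  -- smoothness of the terms
  have sL : ∀ i, ContDiff ℝ (⊤ : ℕ∞) (fun y => vlap u y i) := fun i =>
    ((suu i 0 0).add (suu i 1 1)).add (suu i 2 2)
  have sw : ∀ i, ContDiff ℝ (⊤ : ℕ∞) (fun y => vcurl u y i) := by
    intro i
    fin_cases i
    · exact (su 2 1).sub (su 1 2)
    · exact (su 0 2).sub (su 2 0)
    · exact (su 1 0).sub (su 0 1)
  have sJ : ∀ i, ContDiff ℝ (⊤ : ℕ∞) (fun y => vcurl B y i) := by
    intro i
    fin_cases i
    · exact (sB 2 1).sub (sB 1 2)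
    · exact (sB 0 2).sub (sB 2 0)
    · exact (sB 1 0).sub (sB 0 1)
  have swu : ∀ i j, ContDiff ℝ (⊤ : ℕ∞) (fun y => vcurl u y i * u y j) :=
    fun i j => (sw i).mul (hu j)
  have sBJ : ∀ i j, ContDiff ℝ (⊤ : ℕ∞) (fun y => B y i * vcurl B y j) :=
    fun i j => (hB i).mul (sJ j)
  have sC : ∀ i, ContDiff ℝ (⊤ : ℕ∞) (fun y => cross (vcurl u y) (u y) i) := by
    intro i
    fin_cases i
    · exact (swu 1 2).sub (swu 2 1)
    · exact (swu 2 0).sub (swu 0 2)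
    · exact (swu 0 1).sub (swu 1 0)
  have sD : ∀ i, ContDiff ℝ (⊤ : ℕ∞) (fun y => cross (B y) (vcurl B y) i) := by
    intro i
    fin_cases i
    · exact (sBJ 1 2).sub (sBJ 2 1)
    · exact (sBJ 2 0).sub (sBJ 0 2)
    · exact (sBJ 0 1).sub (sBJ 1 0)
  have sG : ∀ i, ContDiff ℝ (⊤ : ℕ∞) (fun y => grad P y i) := fun i => pd_smooth hP i
  -- differentiated momentum equation
  have dmom : ∀ i j : Fin 3, pd j (fun y => T y i) x - nu * pd j (fun y => vlap u y i) x
      + pd j (fun y => cross (vcurl u y) (u y) i) x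
      + pd j (fun y => cross (B y) (vcurl B y) i) x + pd j (pd i P) x = 0 := by
    intro i j
    have h1 : (fun y => T y i - nu * vlap u y i
        + cross (vcurl u y) (u y) i + cross (B y) (vcurl B y) i
        + grad P y i) = fun _ => 0 := funext fun y => hmom y i
    have h2 : pd j (fun y => T y i - nu * vlap u y i
        + cross (vcurl u y) (u y) i + cross (B y) (vcurl B y) i
        + grad P y i) x = 0 := by rw [h1]; simp [pd]
    have snL : ContDiff ℝ (⊤ : ℕ∞) (fun y => nu * vlap u y i) := contDiff_const.mul (sL i)
    rw [pd_add' ((((hT i).sub snL).add (sC i)).add (sD i)) (sG i),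
      pd_add' (((hT i).sub snL).add (sC i)) (sD i),
      pd_add' ((hT i).sub snL) (sC i), pd_sub' (hT i) snL, pd_cmul (sL i)] at h2
    exact h2
  -- vorticity and current on the boundary
  have w0 : ∀ x, onBdry x → vcurl u x 0 = 0 := fun x hx => by
    change pd 1 (fun y => u y 2) x - pd 2 (fun y => u y 1) x = 0
    rw [du2 1 n1 x hx, hdu1 x hx, sub_zero]
  have w1 : ∀ x, onBdry x → vcurl u x 1 = 0 := fun x hx => by
    change pd 2 (fun y => u y 0) x - pd 0 (fun y => u y 2) x = 0
    rw [du2 0 n0 x hx, hdu0 x hx, sub_zero]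
  have J2 : vcurl B x 2 = 0 := by
    change pd 0 (fun y => B y 1) x - pd 1 (fun y => B y 0) x = 0
    rw [dB0 1 n1 x hx, dB1 0 n0 x hx, sub_zero]
  have dw2 : pd 2 (fun y => vcurl u y 2) x = 0 := by
    change pd 2 (fun y => pd 0 (fun y => u y 1) y - pd 1 (fun y => u y 0) y) x = 0
    rw [pd_sub' (su 1 0) (su 0 1), ddu1 0 n0, ddu0 1 n1, sub_zero]
  have dJ0 : pd 2 (fun y => vcurl B y 0) x = 0 := by
    change pd 2 (fun y => pd 1 (fun y => B y 2) y - pd 2 (fun y => B y 1) y) x = 0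
    rw [pd_sub' (sB 2 1) (sB 1 2), ddB2 1 n1, ddB1, sub_zero]
  have dJ1 : pd 2 (fun y => vcurl B y 1) x = 0 := by
    change pd 2 (fun y => pd 2 (fun y => B y 0) y - pd 0 (fun y => B y 2) y) x = 0
    rw [pd_sub' (sB 0 2) (sB 2 0), ddB2 0 n0, ddB0, sub_zero]
  -- the nonlinear terms
  have tC : ∀ j : Fin 3, j ≠ 2 → pd j (fun y => cross (vcurl u y) (u y) 2) x = 0 := by
    intro j hj
    refine pd_tan (sC 2) (fun z hz => ?_) j hj x hx
    change vcurl u z 0 * u z 1 - vcurl u z 1 * u z 0 = 0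
    rw [w0 z hz, w1 z hz]; ring
  have tD : ∀ j : Fin 3, j ≠ 2 → pd j (fun y => cross (B y) (vcurl B y) 2) x = 0 := by
    intro j hj
    refine pd_tan (sD 2) (fun z hz => ?_) j hj x hx
    change B z 0 * vcurl B z 1 - B z 1 * vcurl B z 0 = 0
    rw [hB0 z hz, hB1 z hz]; ring
  have tT : ∀ j : Fin 3, j ≠ 2 → pd j (fun y => T y 2) x = 0 := fun j hj =>
    pd_tan (hT 2) hT2 j hj x hx
  have nC0 : pd 2 (fun y => cross (vcurl u y) (u y) 0) x = 0 := by
    change pd 2 (fun y => vcurl u y 1 * u y 2 - vcurl u y 2 * u y 1) x = 0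
    rw [pd_sub' (swu 1 2) (swu 2 1), pd_mul' (sw 1) (hu 2), pd_mul' (sw 2) (hu 1),
      w1 x hx, hu2 x hx, dw2, hdu1 x hx]; ring
  have nC1 : pd 2 (fun y => cross (vcurl u y) (u y) 1) x = 0 := by
    change pd 2 (fun y => vcurl u y 2 * u y 0 - vcurl u y 0 * u y 2) x = 0
    rw [pd_sub' (swu 2 0) (swu 0 2), pd_mul' (sw 2) (hu 0), pd_mul' (sw 0) (hu 2),
      w0 x hx, hu2 x hx, dw2, hdu0 x hx]; ring
  have nD0 : pd 2 (fun y => cross (B y) (vcurl B y) 0) x = 0 := by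
    change pd 2 (fun y => B y 1 * vcurl B y 2 - B y 2 * vcurl B y 1) x = 0
    rw [pd_sub' (sBJ 1 2) (sBJ 2 1), pd_mul' (hB 1) (sJ 2), pd_mul' (hB 2) (sJ 1),
      J2, hB1 x hx, dJ1, dB2 x hx]; ring
  have nD1 : pd 2 (fun y => cross (B y) (vcurl B y) 1) x = 0 := by
    change pd 2 (fun y => B y 2 * vcurl B y 0 - B y 0 * vcurl B y 2) x = 0
    rw [pd_sub' (sBJ 2 0) (sBJ 0 2), pd_mul' (hB 2) (sJ 0), pd_mul' (hB 0) (sJ 2),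
      J2, hB0 x hx, dJ0, dB2 x hx]; ring
  constructor
  · change pd 1 (fun y => vlap u y 2) x - pd 2 (fun y => vlap u y 1) x = 0
    have a := dmom 2 1
    have b := dmom 1 2
    rw [tT 1 n1, tC 1 n1, tD 1 n1] at a
    rw [hdT1 x hx, nC1, nD1, pd_comm hP] at b
    have : nu * (pd 1 (fun y => vlap u y 2) x - pd 2 (fun y => vlap u y 1) x) = 0 := by
      linarith
    exact (mul_eq_zero.mp this).resolve_left (ne_of_gt hnu)
  · change pd 2 (fun y => vlap u y 0) x - pd 0 (fun y => vlap u y 2) x = 0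
    have a := dmom 2 0
    have b := dmom 0 2
    rw [tT 0 n0, tC 0 n0, tD 0 n0] at a
    rw [hdT0 x hx, nC0, nD0, pd_comm hP] at b
    have : nu * (pd 2 (fun y => vlap u y 0) x - pd 0 (fun y => vlap u y 2) x) = 0 := by
      linarith
    exact (mul_eq_zero.mp this).resolve_left (ne_of_gt hnu)

theorem slice_deriv {g : ℝ × V3 → ℝ} (hg : ContDiff ℝ (⊤ : ℕ∞) g) (t : ℝ) (x : V3) :
    deriv (fun s => g (s, x)) t = fderiv ℝ g (t, x) (1, 0) := by
  have hd : HasFDerivAt g (fderiv ℝ g (t, x)) (t, x) :=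
    ((hg.differentiable (by simp)) (t, x)).hasFDerivAt
  exact (hd.comp_hasDerivAt t ((hasDerivAt_id t).prodMk (hasDerivAt_const t x))).deriv

theorem slice_pd {g : ℝ × V3 → ℝ} (hg : ContDiff ℝ (⊤ : ℕ∞) g) (t : ℝ) (x : V3) (i : Fin 3) :
    pd i (fun y => g (t, y)) x = fderiv ℝ g (t, x) (0, Pi.single i 1) := by
  have hd : HasFDerivAt g (fderiv ℝ g (t, x)) (t, x) :=
    ((hg.differentiable (by simp)) (t, x)).hasFDerivAt
  have h := hd.comp x ((hasFDerivAt_const t x).prodMk (hasFDerivAt_id x))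
  unfold pd
  have h' : fderiv ℝ (fun y => g (t, y)) x = _ := h.fderiv
  rw [h']
  simp

theorem dir_smooth {g : ℝ × V3 → ℝ} (hg : ContDiff ℝ (⊤ : ℕ∞) g) (v : ℝ × V3) :
    ContDiff ℝ (⊤ : ℕ∞) (fun z => fderiv ℝ g z v) := by
  have h : ContDiff ℝ (⊤ : ℕ∞) (fderiv ℝ g) := hg.fderiv_right (by simp)
  exact h.clm_apply contDiff_const

theorem time_smooth {g : ℝ × V3 → ℝ} (hg : ContDiff ℝ (⊤ : ℕ∞) g) (t : ℝ) :
    ContDiff ℝ (⊤ : ℕ∞) (fun x => deriv (fun s => g (s, x)) t) := by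
  have : (fun x => deriv (fun s => g (s, x)) t) = fun x => fderiv ℝ g (t, x) (1, 0) :=
    funext fun x => slice_deriv hg t x
  rw [this]
  exact (dir_smooth hg (1, 0)).comp (contDiff_const.prodMk contDiff_id)

theorem time_comm {g : ℝ × V3 → ℝ} (hg : ContDiff ℝ (⊤ : ℕ∞) g) (t : ℝ) (x : V3) (i : Fin 3) :
    pd i (fun x => deriv (fun s => g (s, x)) t) x
      = deriv (fun s => pd i (fun y => g (s, y)) x) t := by
  have h1 : (fun x => deriv (fun s => g (s, x)) t) = fun x => fderiv ℝ g (t, x) (1, 0) :=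
    funext fun x => slice_deriv hg t x
  have h2 : (fun s => pd i (fun y => g (s, y)) x)
      = fun s => fderiv ℝ g (s, x) (0, Pi.single i 1) := funext fun s => slice_pd hg s x i
  rw [h1, h2, slice_pd (dir_smooth hg (1, 0)) t x i,
    slice_deriv (dir_smooth hg (0, Pi.single i 1)) t x]
  exact second_symm hg _ _ _

/-- For a smooth solution `(u,B,P)` of the viscous MHD system with the Navier-slip b.c.
for `u` and the insulating b.c. for `B`, one has `(curl)³u(t,·) × n = 0` on `∂Ω` for every
`t`; i.e. the first and second components of `curl(Δu(t,·))` vanish on `∂Ω`. -/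
theorem stmt_8 (nu mu : ℝ) (hnu : 0 < nu) (hmu : 0 < mu)
    (u B : ℝ → V3 → V3) (P : ℝ → V3 → ℝ)
    (hu : ContDiff ℝ (⊤ : ℕ∞) (Function.uncurry u))
    (hB : ContDiff ℝ (⊤ : ℕ∞) (Function.uncurry B))
    (hP : ContDiff ℝ (⊤ : ℕ∞) (Function.uncurry P))
    (hmom : ∀ t x (i : Fin 3),
      deriv (fun s => u s x i) t - nu * vlap (u t) x i
        + cross (vcurl (u t) x) (u t x) i + cross (B t x) (vcurl (B t) x) i
        + grad (P t) x i = 0)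
    (hdivu : ∀ t x, vdiv (u t) x = 0)
    (hind : ∀ t x (i : Fin 3),
      deriv (fun s => B s x i) t - mu * vlap (B t) x i
        = vcurl (fun y => cross (u t y) (B t y)) x i)
    (hdivB : ∀ t x, vdiv (B t) x = 0)
    (hubc : ∀ t x, onBdry x →
      u t x 2 = 0 ∧ pd 2 (fun y => u t y 0) x = 0 ∧ pd 2 (fun y => u t y 1) x = 0)
    (hBbc : ∀ t x, onBdry x → B t x 0 = 0 ∧ B t x 1 = 0) :
    ∀ t x, onBdry x →
      vcurl (vlap (u t)) x 0 = 0 ∧ vcurl (vlap (u t)) x 1 = 0 := by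
  intro t x hx
  have gu : ∀ i, ContDiff ℝ (⊤ : ℕ∞) (fun z : ℝ × V3 => u z.1 z.2 i) := fun i =>
    (contDiff_pi.mp hu) i
  have gB : ∀ i, ContDiff ℝ (⊤ : ℕ∞) (fun z : ℝ × V3 => B z.1 z.2 i) := fun i =>
    (contDiff_pi.mp hB) i
  have inc : ContDiff ℝ (⊤ : ℕ∞) (fun y : V3 => (t, y)) := contDiff_const.prodMk contDiff_id
  refine static_main nu mu hnu hmu (u t) (B t) (fun y i => deriv (fun s => u s y i) t)
    (fun y => deriv (fun s => B s y 0) t) (fun y => deriv (fun s => B s y 1) t) (P t)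
    (fun i => (gu i).comp inc) (fun i => (gB i).comp inc) (fun i => time_smooth (gu i) t)
    (hP.comp inc) (hmom t) (fun x => hind t x 0) (fun x => hind t x 1) (hdivB t)
    (fun x hx => (hubc t x hx).1) (fun x hx => (hubc t x hx).2.1)
    (fun x hx => (hubc t x hx).2.2) (fun x hx => (hBbc t x hx).1)
    (fun x hx => (hBbc t x hx).2) ?_ ?_ ?_ ?_ ?_ x hx
  · intro x hx
    simp [fun s => (hBbc s x hx).1]
  · intro x hx
    simp [fun s => (hBbc s x hx).2]
  · intro x hx
    simp [fun s => (hubc s x hx).1]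
  · intro x hx
    refine (time_comm (gu 0) t x 2).trans ?_
    simp [fun s => (hubc s x hx).2.1]
  · intro x hx
    refine (time_comm (gu 1) t x 2).trans ?_
    simp [fun s => (hubc s x hx).2.2]
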